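/- Let m > 0 and define the continuous-time simple random walk transition kernel p_t(x,y) = ∑_{k=0}^∞ e^{−mt}(mt)^k/k! · P(S_k = y − x) for t > 0 and x, y ∈ ℤ, where S_k is the k-step discrete-time simple symmetric random walk started at 0. Then there exists a constant C > 0 (depending only on m) such that for all t ≥ 1 and all x, y ∈ ℤ, p_t(x,y) ≤ C/√t. -/

import Mathlib

/-- `P(S_k = z)` for the `k`-step simple symmetric random walk on `ℤ` started at `0`. -/
noncomputable def srwPMF (k : ℕ) (z : ℤ) : ℝ :=
  ((Finset.univ.filter
      (fun ε : Fin k → Bool => (∑ i, if ε i then (1 : ℤ) else -1) = z)).card : ℝ) / 2 ^ k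

/-- Transition kernel `p_t(x,y) = ∑_k e^{-mt}(mt)^k/k! P(S_k = y-x)` of the continuous-time
simple random walk on `ℤ` with total jump rate `m`. -/
noncomputable def ctKernel (m t : ℝ) (x y : ℤ) : ℝ :=
  ∑' k : ℕ, Real.exp (-(m * t)) * (m * t) ^ k / k.factorial * srwPMF k (y - x)

theorem aux_central (n : ℕ) : (Nat.centralBinom n) ^ 2 * (2 * n + 1) ≤ 4 ^ (2 * n) := by
  induction n with
  | zero => simp
  | succ n ih =>
    have h := Nat.succ_mul_centralBinom_succ n
    have h2 : (n + 1) ^ 2 * ((Nat.centralBinom (n + 1)) ^ 2 * (2 * (n + 1) + 1))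
        ≤ (n + 1) ^ 2 * 4 ^ (2 * (n + 1)) := by
      calc (n + 1) ^ 2 * ((Nat.centralBinom (n + 1)) ^ 2 * (2 * (n + 1) + 1))
          = ((n + 1) * Nat.centralBinom (n + 1)) ^ 2 * (2 * n + 3) := by ring
        _ = (Nat.centralBinom n ^ 2 * (2 * n + 1)) * (4 * ((2 * n + 1) * (2 * n + 3))) := by
            rw [h]; ring
        _ ≤ 4 ^ (2 * n) * (4 * (4 * (n + 1) ^ 2)) := by
            refine Nat.mul_le_mul ih ?_
            nlinarith
        _ = (n + 1) ^ 2 * 4 ^ (2 * (n + 1)) := by ring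
    exact Nat.le_of_mul_le_mul_left h2 (by positivity)

theorem aux_choose (k : ℕ) : (k.choose (k / 2)) ^ 2 * (k + 1) ≤ 4 ^ k := by
  rcases Nat.even_or_odd' k with ⟨n, rfl | rfl⟩
  · have := aux_central n
    rw [Nat.centralBinom] at this
    rwa [Nat.mul_div_cancel_left n (by norm_num)]
  · have h := aux_central (n + 1)
    have e : (2 * n + 1) / 2 = n := by omega
    rw [e]
    have h1 : Nat.centralBinom (n + 1) = 2 * (2 * n + 1).choose n := by
      rw [Nat.centralBinom, show 2 * (n + 1) = (2 * n + 1) + 1 by ring, Nat.choose_succ_succ]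
      have : (2 * n + 1).choose (n + 1) = (2 * n + 1).choose n :=
        Nat.choose_symm_half n
      rw [Nat.succ_eq_add_one] at *
      omega
    rw [h1] at h
    have e4 : 4 ^ (2 * (n + 1)) = 4 * 4 ^ (2 * n + 1) := by ring
    rw [e4] at h
    nlinarith [sq_nonneg ((2 * n + 1).choose n)]

theorem aux_card (k : ℕ) (z : ℤ) :
    (Finset.univ.filter
      (fun ε : Fin k → Bool => (∑ i, if ε i then (1 : ℤ) else -1) = z)).card
      ≤ k.choose (k / 2) := by
  have key : (Finset.univ.filter
      (fun ε : Fin k → Bool => (∑ i, if ε i then (1 : ℤ) else -1) = z)).card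
      ≤ (Finset.powersetCard ((z + k) / 2).toNat (Finset.univ : Finset (Fin k))).card := by
    refine Finset.card_le_card_of_injOn
      (fun ε => Finset.univ.filter (fun i => ε i = true)) ?_ ?_
    · intro ε hε
      have hε : (∑ i, if ε i then (1 : ℤ) else -1) = z := by simpa using hε
      have h2 : (∑ i, if ε i then (1 : ℤ) else -1)
          = 2 * ((Finset.univ.filter (fun i => ε i = true)).card : ℤ) - k := by
        have : ∀ i, (if ε i then (1 : ℤ) else -1) = 2 * (if ε i = true then 1 else 0) - 1 := by
          intro i; split_ifs <;> norm_num
        simp only [this, Finset.sum_sub_distrib, ← Finset.mul_sum, Finset.sum_boole]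
        simp
      simp only [Finset.mem_coe,
        Finset.mem_powersetCard]
      refine ⟨Finset.subset_univ _, ?_⟩
      omega
    · intro a _ b _ hab
      funext i
      have := congrArg (fun s => i ∈ s) hab
      simp at this
      exact this
  rw [Finset.card_powersetCard, Finset.card_univ, Fintype.card_fin] at key
  exact key.trans (Nat.choose_le_middle _ _)

theorem aux_srw_nonneg (k : ℕ) (z : ℤ) : 0 ≤ srwPMF k z := by
  unfold srwPMF; positivity

theorem aux_srw (k : ℕ) (z : ℤ) : (srwPMF k z) ^ 2 * (k + 1) ≤ 1 := by
  unfold srwPMF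
  have h1 := aux_card k z
  set c := (Finset.univ.filter
      (fun ε : Fin k → Bool => (∑ i, if ε i then (1 : ℤ) else -1) = z)).card
  have h2 : c ^ 2 * (k + 1) ≤ 4 ^ k :=
    (Nat.mul_le_mul_right _ (Nat.pow_le_pow_left h1 2)).trans (aux_choose k)
  have h3 : (c : ℝ) ^ 2 * (k + 1) ≤ 4 ^ k := by exact_mod_cast h2
  rw [div_pow, ← pow_mul, mul_comm k 2, pow_mul, div_mul_eq_mul_div, div_le_one (by positivity)]
  norm_num
  exact h3

theorem aux_srw_a (k : ℕ) (z : ℤ) (a : ℝ) (ha : 0 < a) :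
    srwPMF k z ≤ (a / (k + 1) + 1 / a) / 2 := by
  have h := aux_srw k z
  set s := srwPMF k z
  have hk : (0 : ℝ) < k + 1 := by positivity
  have : (a / (k + 1) + 1 / a) / 2 = (a ^ 2 + (k + 1)) / (2 * a * (k + 1)) := by
    field_simp
  rw [this, le_div_iff₀ (by positivity)]
  nlinarith [sq_nonneg (a - s * (k + 1)), mul_le_mul_of_nonneg_right h hk.le]

theorem aux_bound (l : ℝ) (hl : 0 < l) (z : ℤ) :
    ∑' k : ℕ, Real.exp (-l) * l ^ k / k.factorial * srwPMF k z ≤ 1 / Real.sqrt l := by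
  set a := Real.sqrt l with ha
  have hapos : 0 < a := Real.sqrt_pos.mpr hl
  have hsq : a ^ 2 = l := Real.sq_sqrt hl.le
  have hE : HasSum (fun k : ℕ => l ^ k / k.factorial) (Real.exp l) := by
    rw [Real.exp_eq_exp_ℝ]
    exact NormedSpace.expSeries_div_hasSum_exp l
  have hE1 : HasSum (fun k : ℕ => l ^ (k + 1) / (k + 1).factorial) (Real.exp l - 1) := by
    have := (hasSum_nat_add_iff' (f := fun k : ℕ => l ^ k / (k.factorial : ℝ)) 1).mpr hE
    simpa using this
  have hS := ((hE1.mul_left (a / l)).add (hE.mul_left (1 / a))).mul_left (Real.exp (-l) / 2)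
  have hle : ∀ k : ℕ, Real.exp (-l) * l ^ k / k.factorial * srwPMF k z ≤
      Real.exp (-l) / 2 * (a / l * (l ^ (k + 1) / (k + 1).factorial)
        + 1 / a * (l ^ k / k.factorial)) := by
    intro k
    have h := mul_le_mul_of_nonneg_left (aux_srw_a k z a hapos)
      (show 0 ≤ Real.exp (-l) * l ^ k / k.factorial by positivity)
    refine h.trans (le_of_eq ?_)
    rw [Nat.factorial_succ]
    push_cast
    field_simp
    ring
  have hsum : Summable (fun k : ℕ => Real.exp (-l) * l ^ k / k.factorial * srwPMF k z) :=
    Summable.of_nonneg_of_le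
      (fun k => mul_nonneg (by positivity) (aux_srw_nonneg k z)) hle hS.summable
  refine (hasSum_le hle hsum.hasSum hS).trans ?_
  have e1 : a / l = 1 / a := by rw [← hsq]; field_simp
  have e2 : Real.exp (-l) * Real.exp l = 1 := by rw [← Real.exp_add]; simp
  rw [e1]
  have : Real.exp (-l) / 2 * (1 / a * (Real.exp l - 1) + 1 / a * Real.exp l)
      = 1 / a * (Real.exp (-l) * Real.exp l) - 1 / a * Real.exp (-l) / 2 := by ring
  rw [this, e2]
  have : 0 ≤ 1 / a * Real.exp (-l) / 2 := by positivity
  linarith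

/-- there is a constant `C > 0` (depending only on `m`) such that
`p_t(x,y) ≤ C/√t` for all `t ≥ 1` and all `x, y ∈ ℤ`. -/
theorem ctKernel_bound (m : ℝ) (hm : 0 < m) :
    ∃ C : ℝ, 0 < C ∧ ∀ t : ℝ, 1 ≤ t → ∀ x y : ℤ, ctKernel m t x y ≤ C / Real.sqrt t := by
  refine ⟨1 / Real.sqrt m, by positivity, fun t ht x y => ?_⟩
  have h := aux_bound (m * t) (by positivity) (y - x)
  rw [Real.sqrt_mul hm.le] at h
  rw [div_div]
  exact h
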